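/- arXiv:2308.15026 — 2 statements merged into one kernel-verified Lean document; each statement's English description precedes it below -/
import Mathlib

section
/- Let ζ ∈ (-1/2, ∞), α ∈ (0,2), and 0 < C₀ ≤ 1. Then there exist constants c, C > 0 (depending only on ζ, α, C₀) such that for all τ ∈ [C₀, 1/C₀] and all z, s > 0: c · p_ζ^{(α)}(1,z,s) ≤ p_ζ^{(α)}(τ,z,s) ≤ C · p_ζ^{(α)}(1,z,s). -/
open MeasureTheory Real Set Filter

/-- Modified Bessel function of the first kind of order `ν`. -/
noncomputable def besselI (ν x : ℝ) : ℝ :=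
  ∑' k : ℕ, (x / 2) ^ (2 * (k : ℝ) + ν) / ((Nat.factorial k : ℝ) * Real.Gamma ((k : ℝ) + ν + 1))

/-- The Bessel heat kernel `p_ζ^{(2)}(t,r,s)`. -/
noncomputable def besselHeat (ζ t r s : ℝ) : ℝ :=
  (r * s) ^ ((1 : ℝ) / 2 - ζ) / (2 * t) * Real.exp (-(r ^ 2 + s ^ 2) / (4 * t)) *
    besselI (ζ - 1 / 2) (r * s / (2 * t))

/-- `σ` is a family of `α/2`-stable subordinator densities. -/
def IsStableSubordinatorDensity (α : ℝ) (σ : ℝ → ℝ → ℝ) : Prop :=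
  (∀ t, 0 < t → ∀ τ, 0 < τ → 0 ≤ σ t τ) ∧
  (∀ t, 0 < t → Measurable (σ t)) ∧
  (∀ t l : ℝ, 0 < t → 0 ≤ l →
    (∫ τ in Ioi (0 : ℝ), Real.exp (-τ * l) * σ t τ) = Real.exp (-t * l ^ (α / 2)))

/-- The `α/2`-subordinated Bessel heat kernel `p_ζ^{(α)}(t,r,s)`. -/
noncomputable def subKernel (ζ : ℝ) (σ : ℝ → ℝ → ℝ) (t r s : ℝ) : ℝ :=
  ∫ τ in Ioi (0 : ℝ), besselHeat ζ τ r s * σ t τ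

/-- The coefficients of the power series of `w ↦ w ^ (-ν) * besselI ν (2 * w)` in `w ^ 2`. -/
noncomputable def besselCoeff (ν : ℝ) (k : ℕ) : ℝ :=
  1 / ((Nat.factorial k : ℝ) * Real.Gamma ((k : ℝ) + ν + 1))

lemma besselCoeff_pos {ν : ℝ} (hν : -1 < ν) (k : ℕ) : 0 < besselCoeff ν k := by
  have hk : (0 : ℝ) ≤ k := k.cast_nonneg
  have := Real.Gamma_pos_of_pos (show 0 < (k : ℝ) + ν + 1 by linarith)
  unfold besselCoeff
  positivity

lemma besselCoeff_succ {ν : ℝ} (hν : -1 < ν) (k : ℕ) :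
    besselCoeff ν k = ((k : ℝ) + 1) * (k + 1 + ν) * besselCoeff ν (k + 1) := by
  have hk : (0 : ℝ) ≤ k := k.cast_nonneg
  have h1 : 0 < (k : ℝ) + ν + 1 := by linarith
  have h2 := Real.Gamma_pos_of_pos h1
  have h3 : Real.Gamma (((k + 1 : ℕ) : ℝ) + ν + 1) = (k + ν + 1) * Real.Gamma (k + ν + 1) := by
    rw [← Real.Gamma_add_one h1.ne']
    push_cast
    ring_nf
  unfold besselCoeff
  rw [h3, Nat.factorial_succ]
  push_cast
  field_simp
  ring

lemma summable_besselCoeff {ν : ℝ} (hν : -1 < ν) (w : ℝ) :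
    Summable fun k => besselCoeff ν k * w ^ (2 * k) := by
  have hb : ∀ k : ℕ, besselCoeff ν (k + 1) ≤ besselCoeff ν 1 / (Nat.factorial k : ℝ) := by
    intro k
    induction k with
    | zero => simp
    | succ k ih =>
      have hpos := besselCoeff_pos hν (k + 1 + 1)
      have hk : (0 : ℝ) ≤ k := k.cast_nonneg
      have h := besselCoeff_succ hν (k + 1)
      push_cast at h
      have h1 : ((k : ℝ) + 1) * besselCoeff ν (k + 1 + 1) ≤ besselCoeff ν (k + 1) := by
        rw [h]
        gcongr
        nlinarith
      rw [Nat.factorial_succ]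
      push_cast
      rw [mul_comm, ← div_div, le_div_iff₀ (by positivity), mul_comm]
      exact h1.trans ih
  rw [← summable_nat_add_iff 1]
  refine Summable.of_nonneg_of_le
    (fun k => mul_nonneg (besselCoeff_pos hν _).le (by rw [pow_mul]; positivity)) (fun k => ?_)
    ((Real.summable_pow_div_factorial (w ^ 2)).mul_left (besselCoeff ν 1 * w ^ 2))
  calc besselCoeff ν (k + 1) * w ^ (2 * (k + 1))
      ≤ besselCoeff ν 1 / (Nat.factorial k : ℝ) * w ^ (2 * (k + 1)) := by
        gcongr
        · rw [pow_mul]; positivity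
        · exact hb k
    _ = _ := by rw [pow_mul, pow_succ]; ring

lemma besselCoeff_mul_le_sum {ν w : ℝ} (hν : -1 < ν) (hw : 0 < w) (N : ℕ) :
    besselCoeff ν N * w ^ (2 * N + 1) ≤ ∑ k ∈ Finset.range (N + 1),
      besselCoeff ν k * (2 * w ^ (2 * k + 1) - (2 * k - 2) * w ^ (2 * k)) := by
  induction N with
  | zero =>
    have := besselCoeff_pos hν 0
    simp only [mul_zero, zero_add, pow_one, Finset.range_one, Nat.cast_zero, pow_zero, mul_one,
      zero_sub, sub_neg_eq_add, Finset.sum_singleton]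
    gcongr
    linarith
  | succ N ih =>
    rw [Finset.sum_range_succ]
    have hpos := besselCoeff_pos hν (N + 1)
    have hN : (0 : ℝ) ≤ N := N.cast_nonneg
    have h1 : (N : ℝ) ^ 2 * besselCoeff ν (N + 1) ≤ besselCoeff ν N := by
      rw [besselCoeff_succ hν N]
      gcongr
      nlinarith
    have h2 : (N : ℝ) ^ 2 * besselCoeff ν (N + 1) * w ^ (2 * N + 1)
        ≤ besselCoeff ν N * w ^ (2 * N + 1) := by gcongr
    have h3 : 0 ≤ besselCoeff ν (N + 1) * w ^ (2 * N + 1) * (N - w) ^ 2 := by positivity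
    have h4 : w ^ (2 * (N + 1)) = w ^ (2 * N + 1) * w := by ring
    have h5 : w ^ (2 * (N + 1) + 1) = w ^ (2 * N + 1) * w ^ 2 := by ring
    rw [h4, h5]
    push_cast
    nlinarith

lemma antitoneOn_besselCoeff_sum {ν : ℝ} (hν : -1 < ν) (N : ℕ) :
    AntitoneOn (fun w : ℝ => Real.exp (-2 * w) / w ^ 2 *
      ∑ k ∈ Finset.range (N + 1), besselCoeff ν k * w ^ (2 * k)) (Ioi 0) := by
  have key : ∀ w : ℝ, 0 < w → HasDerivAt (fun w : ℝ => Real.exp (-2 * w) / w ^ 2 *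
      ∑ k ∈ Finset.range (N + 1), besselCoeff ν k * w ^ (2 * k))
      (-(Real.exp (-2 * w) / w ^ 3) * ∑ k ∈ Finset.range (N + 1),
        besselCoeff ν k * (2 * w ^ (2 * k + 1) - (2 * k - 2) * w ^ (2 * k))) w := by
    intro w hw
    have h1 : HasDerivAt (fun w : ℝ => Real.exp (-2 * w)) (Real.exp (-2 * w) * (-2)) w := by
      simpa using ((hasDerivAt_id w).const_mul (-2)).exp
    have h2 := h1.div (hasDerivAt_pow 2 w) (by positivity)
    have h3 : HasDerivAt (fun w : ℝ => ∑ k ∈ Finset.range (N + 1), besselCoeff ν k * w ^ (2 * k))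
        (∑ k ∈ Finset.range (N + 1), besselCoeff ν k * (2 * k * w ^ (2 * k) / w)) w := by
      refine HasDerivAt.fun_sum fun k _ => HasDerivAt.const_mul _ ?_
      refine (hasDerivAt_pow (2 * k) w).congr_deriv ?_
      rcases k with _ | k
      · simp
      · rw [show 2 * (k + 1) = 2 * (k + 1) - 1 + 1 by omega, pow_succ w (2 * (k + 1) - 1)]
        simp only [Nat.add_sub_cancel]
        rw [show 2 * (k + 1) - 1 + 1 = 2 * (k + 1) by omega]
        push_cast
        field_simp
    refine (h2.mul h3).congr_deriv ?_
    simp only [Finset.mul_sum, ← Finset.sum_add_distrib]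
    refine Finset.sum_congr rfl fun k _ => ?_
    simp only [Pi.div_apply]
    push_cast
    field_simp
    ring
  refine antitoneOn_of_deriv_nonpos (convex_Ioi 0)
    (fun w hw => (key w hw).continuousAt.continuousWithinAt)
    (fun w hw => (key w (by simpa using hw)).differentiableAt.differentiableWithinAt) fun w hw => ?_
  have hw : 0 < w := by simpa using hw
  rw [(key w hw).deriv, neg_mul, neg_nonpos]
  refine mul_nonneg (by positivity) (le_trans ?_ (besselCoeff_mul_le_sum hν hw N))
  have := besselCoeff_pos hν N
  positivity

lemma antitoneOn_besselCoeff_tsum {ν : ℝ} (hν : -1 < ν) :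
    AntitoneOn (fun w : ℝ => Real.exp (-2 * w) / w ^ 2 *
      ∑' k, besselCoeff ν k * w ^ (2 * k)) (Ioi 0) := by
  have hlim : ∀ w : ℝ, Tendsto (fun N => Real.exp (-2 * w) / w ^ 2 *
      ∑ k ∈ Finset.range (N + 1), besselCoeff ν k * w ^ (2 * k)) atTop
      (nhds (Real.exp (-2 * w) / w ^ 2 * ∑' k, besselCoeff ν k * w ^ (2 * k))) := fun w =>
    ((summable_besselCoeff hν w).hasSum.tendsto_sum_nat.comp (tendsto_add_atTop_nat 1)).const_mul _
  intro x hx y hy hxy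
  exact le_of_tendsto_of_tendsto' (hlim y) (hlim x)
    fun N => antitoneOn_besselCoeff_sum hν N hx hy hxy

lemma besselI_eq_tsum {ν x : ℝ} (hx : 0 < x) :
    besselI ν x = (x / 2) ^ ν * ∑' k, besselCoeff ν k * (x / 2) ^ (2 * k) := by
  unfold besselI besselCoeff
  rw [← tsum_mul_left]
  refine tsum_congr fun k => ?_
  rw [Real.rpow_add (by positivity), ← Real.rpow_natCast (x / 2) (2 * k)]
  push_cast
  ring

lemma besselI_nonneg {ν x : ℝ} (hν : -1 < ν) (hx : 0 < x) : 0 ≤ besselI ν x := by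
  rw [besselI_eq_tsum hx]
  refine mul_nonneg (by positivity) (tsum_nonneg fun k => ?_)
  have := besselCoeff_pos hν k
  positivity

lemma besselHeat_nonneg {ζ t r s : ℝ} (hζ : -1/2 < ζ) (ht : 0 < t) (hr : 0 < r) (hs : 0 < s) :
    0 ≤ besselHeat ζ t r s := by
  have := besselI_nonneg (ν := ζ - 1 / 2) (by linarith) (show 0 < r * s / (2 * t) by positivity)
  unfold besselHeat
  positivity

lemma measurable_besselHeat (ζ r s : ℝ) : Measurable fun t => besselHeat ζ t r s := by
  unfold besselHeat besselI
  refine Measurable.mul (by fun_prop) (Measurable.tsum fun k => ?_)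
  fun_prop

/-- The Bessel heat kernel decreases in time at most polynomially. -/
lemma besselHeat_le_of_le {ζ u v r s : ℝ} (hζ : -1/2 < ζ) (hu : 0 < u) (huv : u ≤ v)
    (hr : 0 < r) (hs : 0 < s) :
    besselHeat ζ u r s ≤ (v / u) ^ (ζ + 5 / 2) * besselHeat ζ v r s := by
  have hv := hu.trans_le huv
  set S : ℝ → ℝ := fun w => ∑' k, besselCoeff (ζ - 1 / 2) k * w ^ (2 * k)
  have hS : ∀ w, 0 < w → 0 ≤ S w := fun w hw => tsum_nonneg fun k => by
    have := besselCoeff_pos (ν := ζ - 1 / 2) (by linarith) k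
    positivity
  set q := r * s / 4 with hq
  have hq0 : 0 < q := by positivity
  have hform : ∀ t, 0 < t → besselHeat ζ t r s = (r * s) ^ (1 / 2 - ζ) / 2 * q ^ (ζ + 3 / 2) *
      t ^ (-(ζ + 5 / 2)) * Real.exp (-(r - s) ^ 2 / (4 * t)) *
      (Real.exp (-2 * (q / t)) / (q / t) ^ 2 * S (q / t)) := by
    intro t ht
    unfold besselHeat
    rw [besselI_eq_tsum (by positivity), show r * s / (2 * t) / 2 = q / t by rw [hq]; ring]
    have e1 : Real.exp (-(r ^ 2 + s ^ 2) / (4 * t)) =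
        Real.exp (-(r - s) ^ 2 / (4 * t)) * Real.exp (-2 * (q / t)) := by
      rw [← Real.exp_add]
      congr 1
      rw [hq]
      field_simp
      ring
    have e2 : (q / t) ^ (ζ - 1 / 2) = q ^ (ζ + 3 / 2) * t ^ (-(ζ + 5 / 2)) * t / (q / t) ^ 2 := by
      rw [Real.div_rpow hq0.le ht.le, show ζ + 3 / 2 = (ζ - 1 / 2) + 2 by ring,
        show -(ζ + 5 / 2) = -(ζ - 1 / 2) + -3 by ring, Real.rpow_add hq0, Real.rpow_add ht,
        Real.rpow_neg ht.le, Real.rpow_neg ht.le]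
      norm_cast
      field_simp
    change (r * s) ^ (1 / 2 - ζ) / (2 * t) * _ * (_ * S (q / t)) = _
    rw [e1, e2]
    field_simp
  rw [hform u hu, hform v hv]
  have a1 : (v / u) ^ (ζ + 5 / 2) * v ^ (-(ζ + 5 / 2)) = u ^ (-(ζ + 5 / 2)) := by
    rw [Real.div_rpow hv.le hu.le, Real.rpow_neg hv.le, Real.rpow_neg hu.le]
    have := Real.rpow_pos_of_pos hv (ζ + 5 / 2)
    field_simp
  have a2 : Real.exp (-(r - s) ^ 2 / (4 * u)) ≤ Real.exp (-(r - s) ^ 2 / (4 * v)) := by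
    rw [Real.exp_le_exp, neg_div, neg_div, neg_le_neg_iff]
    gcongr
  have a3 := antitoneOn_besselCoeff_tsum (ν := ζ - 1 / 2) (by linarith)
    (show q / v ∈ Ioi 0 from div_pos hq0 hv) (show q / u ∈ Ioi 0 from div_pos hq0 hu)
    (show q / v ≤ q / u by gcongr)
  calc _ ≤ (r * s) ^ (1 / 2 - ζ) / 2 * q ^ (ζ + 3 / 2) *
      u ^ (-(ζ + 5 / 2)) * Real.exp (-(r - s) ^ 2 / (4 * v)) *
      (Real.exp (-2 * (q / v)) / (q / v) ^ 2 * S (q / v)) := by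
        have := hS (q / u) (by positivity)
        gcongr
    _ = _ := by rw [← a1]; ring

/-- `μ` is the law of a `β`-stable subordinator at time `t`. -/
def IsStableLaw (β t : ℝ) (μ : Measure ℝ) : Prop :=
  (∀ᵐ u ∂μ, 0 < u) ∧ ∀ l, 0 ≤ l → Integrable (fun u => Real.exp (-u * l)) μ ∧
    ∫ u, Real.exp (-u * l) ∂μ = Real.exp (-t * l ^ β)

lemma one_sub_exp_neg_le (x : ℝ) : 1 - Real.exp (-x) ≤ x := by
  linarith [Real.add_one_le_exp (-x)]

lemma div_one_add_le_one_sub_exp_neg {x : ℝ} (hx : 0 ≤ x) : x / (1 + x) ≤ 1 - Real.exp (-x) := by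
  have h1 : Real.exp (-x) ≤ 1 / (1 + x) := by
    rw [Real.exp_neg, ← one_div]
    gcongr
    linarith [Real.add_one_le_exp x]
  have h2 : x / (1 + x) = 1 - 1 / (1 + x) := by field_simp; ring
  linarith

lemma half_le_one_sub_exp_neg {x : ℝ} (hx : 0 ≤ x) (hx1 : x ≤ 1) :
    x / 2 ≤ 1 - Real.exp (-x) := by
  refine le_trans ?_ (div_one_add_le_one_sub_exp_neg hx)
  gcongr
  linarith

lemma one_half_le_one_sub_exp_neg {x : ℝ} (hx : 1 ≤ x) : 1 / 2 ≤ 1 - Real.exp (-x) := by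
  refine le_trans ?_ (div_one_add_le_one_sub_exp_neg (by linarith))
  rw [div_le_div_iff₀ (by norm_num) (by linarith)]
  linarith

namespace IsStableLaw

variable {β t : ℝ} {μ : Measure ℝ}

lemma isProbabilityMeasure (h : IsStableLaw β t μ) (hβ : 0 < β) : IsProbabilityMeasure μ := by
  obtain ⟨h1, h2⟩ := h.2 0 le_rfl
  simp only [mul_zero, Real.exp_zero, Real.zero_rpow hβ.ne'] at h1 h2
  have : IsFiniteMeasure μ := by
    rcases integrable_const_iff.1 h1 with h | h
    · norm_num at h
    · exact h
  rw [integral_const, smul_eq_mul, mul_one] at h2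
  exact ⟨by rw [← ENNReal.toReal_eq_one_iff]; exact h2⟩

lemma integrable_one_sub (h : IsStableLaw β t μ) (hβ : 0 < β) {l : ℝ} (hl : 0 ≤ l) :
    Integrable (fun u => 1 - Real.exp (-(u * l))) μ := by
  have := h.isProbabilityMeasure hβ
  have h2 := (h.2 l hl).1
  simp only [neg_mul] at h2
  exact (integrable_const (1 : ℝ)).sub h2

lemma integral_one_sub (h : IsStableLaw β t μ) (hβ : 0 < β) {l : ℝ} (hl : 0 ≤ l) :
    ∫ u, (1 - Real.exp (-(u * l))) ∂μ = 1 - Real.exp (-(t * l ^ β)) := by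
  have := h.isProbabilityMeasure hβ
  have h2 := h.2 l hl
  simp only [neg_mul] at h2
  rw [integral_sub (integrable_const _) h2.1, h2.2]
  simp

lemma real_Ici_le (h : IsStableLaw β t μ) (hβ : 0 < β) {R : ℝ} (hR : 0 < R) :
    μ.real (Ici R) ≤ 2 * t * R ^ (-β) := by
  have := h.isProbabilityMeasure hβ
  have hR' : 0 ≤ R⁻¹ := by positivity
  calc μ.real (Ici R) = ∫ u, (Ici R).indicator 1 u ∂μ :=
        (integral_indicator_one measurableSet_Ici).symm
    _ ≤ ∫ u, 2 * (1 - Real.exp (-(u * R⁻¹))) ∂μ := by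
      refine integral_mono_ae ((integrable_const (1 : ℝ)).indicator measurableSet_Ici)
        ((h.integrable_one_sub hβ hR').const_mul 2) ?_
      filter_upwards [h.1] with u hu
      by_cases hu' : u ∈ Ici R
      · rw [indicator_of_mem hu', Pi.one_apply]
        have : 1 ≤ u * R⁻¹ := by rw [← div_eq_mul_inv, one_le_div hR]; exact hu'
        linarith [one_half_le_one_sub_exp_neg this]
      · rw [indicator_of_notMem hu']
        have : Real.exp (-(u * R⁻¹)) ≤ 1 := Real.exp_le_one_iff.2 (by
          have : 0 ≤ u * R⁻¹ := by positivity
          linarith)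
        linarith
    _ = 2 * (1 - Real.exp (-(t * R⁻¹ ^ β))) := by
      rw [integral_const_mul, h.integral_one_sub hβ hR']
    _ ≤ 2 * t * R ^ (-β) := by
      rw [Real.inv_rpow hR.le, ← Real.rpow_neg hR.le]
      linarith [one_sub_exp_neg_le (t * R ^ (-β))]

lemma one_sub_exp_le_real_Ioc (h : IsStableLaw β t μ) (hβ : 0 < β) {R ε K : ℝ} (hR : 0 < R)
    (hε : 0 < ε) (hK : 0 < K) :
    1 - Real.exp (-(t * (ε ^ β * R ^ (-β)))) ≤
      μ.real (Ioc R (K * R)) + 2 * ε * (t * R ^ (-β)) + 2 * (t * (K ^ (-β) * R ^ (-β))) := by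
  have := h.isProbabilityMeasure hβ
  have hR' : 0 ≤ R⁻¹ := by positivity
  have hεR : 0 ≤ ε * R⁻¹ := by positivity
  have hKR : 0 ≤ (K * R)⁻¹ := by positivity
  have i1 : Integrable (fun u => (Ioc R (K * R)).indicator 1 u) μ :=
    (integrable_const (1 : ℝ)).indicator measurableSet_Ioc
  have i2 := (h.integrable_one_sub hβ hR').const_mul (2 * ε)
  have i3 := (h.integrable_one_sub hβ hKR).const_mul 2
  have key : ∫ u, (1 - Real.exp (-(u * (ε * R⁻¹)))) ∂μ ≤
      ∫ u, ((Ioc R (K * R)).indicator 1 u + 2 * ε * (1 - Real.exp (-(u * R⁻¹))) +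
        2 * (1 - Real.exp (-(u * (K * R)⁻¹)))) ∂μ := by
    refine integral_mono_ae (h.integrable_one_sub hβ hεR) ((i1.add i2).add i3) ?_
    filter_upwards [h.1] with u hu
    have p0 := Real.exp_pos (-(u * (ε * R⁻¹)))
    have p1 : 0 ≤ 1 - Real.exp (-(u * R⁻¹)) :=
      sub_nonneg.2 (Real.exp_le_one_iff.2 (neg_nonpos.2 (by positivity)))
    have p2 : 0 ≤ 1 - Real.exp (-(u * (K * R)⁻¹)) :=
      sub_nonneg.2 (Real.exp_le_one_iff.2 (neg_nonpos.2 (by positivity)))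
    have p3 : 0 ≤ 2 * ε * (1 - Real.exp (-(u * R⁻¹))) := by positivity
    have p4 : (0 : ℝ) ≤ (Ioc R (K * R)).indicator 1 u := indicator_nonneg (by simp) u
    rcases le_or_gt u R with hu1 | hu1
    · have q1 : u * R⁻¹ ≤ 1 := by rw [← div_eq_mul_inv]; exact div_le_one_of_le₀ hu1 hR.le
      have q2 := half_le_one_sub_exp_neg (by positivity) q1
      have q3 := one_sub_exp_neg_le (u * (ε * R⁻¹))
      have q4 : u * (ε * R⁻¹) = 2 * ε * (u * R⁻¹ / 2) := by ring
      have q5 : 2 * ε * (u * R⁻¹ / 2) ≤ 2 * ε * (1 - Real.exp (-(u * R⁻¹))) := by gcongr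
      linarith
    rcases le_or_gt u (K * R) with hu2 | hu2
    · rw [indicator_of_mem (show u ∈ Ioc R (K * R) from ⟨hu1, hu2⟩), Pi.one_apply]
      linarith
    · have q1 : 1 ≤ u * (K * R)⁻¹ := by
        rw [← div_eq_mul_inv, one_le_div (by positivity)]
        exact hu2.le
      linarith [one_half_le_one_sub_exp_neg q1]
  rw [h.integral_one_sub hβ hεR, integral_add (by exact i1.add i2) i3, integral_add i1 i2,
    integral_const_mul, integral_const_mul, h.integral_one_sub hβ hR', h.integral_one_sub hβ hKR,
    integral_indicator_one measurableSet_Ioc, Real.mul_rpow hε.le hR', Real.inv_rpow hR.le,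
    Real.inv_rpow (by positivity), Real.mul_rpow hK.le hR.le, mul_inv, ← Real.rpow_neg hR.le,
    ← Real.rpow_neg hK.le] at key
  have k1 : 2 * ε * (1 - Real.exp (-(t * R ^ (-β)))) ≤ 2 * ε * (t * R ^ (-β)) := by
    gcongr
    exact one_sub_exp_neg_le _
  have k2 := one_sub_exp_neg_le (t * (K ^ (-β) * R ^ (-β)))
  linarith

end IsStableLaw

lemma exists_pos_rpow_le {β δ : ℝ} (hβ : 0 < β) (hδ : 0 < δ) :
    ∃ ε : ℝ, 0 < ε ∧ ∀ e, 0 < e → e ≤ ε → e ^ β ≤ δ := by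
  refine ⟨δ ^ β⁻¹, by positivity, fun e he hle => ?_⟩
  calc e ^ β ≤ (δ ^ β⁻¹) ^ β := by gcongr
    _ = δ := Real.rpow_inv_rpow hδ.le hβ.ne'

lemma exists_le_real_Ioc {β C₀ : ℝ} (hβ : 0 < β) (hβ1 : β < 1) (hC : 0 < C₀) :
    ∃ K c : ℝ, 1 ≤ K ∧ 0 < c ∧ ∀ t ∈ Icc C₀ (1 / C₀), ∀ μ, IsStableLaw β t μ → ∀ R, 1 ≤ R →
      c * R ^ (-β) ≤ μ.real (Ioc R (K * R)) := by
  obtain ⟨ε₁, hε₁, h₁⟩ := exists_pos_rpow_le hβ hC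
  obtain ⟨ε₂, hε₂, h₂⟩ := exists_pos_rpow_le (sub_pos.2 hβ1) (show (0 : ℝ) < 1 / 16 by norm_num)
  set ε := min ε₁ ε₂
  have hε : 0 < ε := lt_min hε₁ hε₂
  have e1 : ε ^ β ≤ C₀ := h₁ ε hε (min_le_left _ _)
  have e2 : ε ≤ ε ^ β / 16 := by
    have : ε = ε ^ β * ε ^ (1 - β) := by rw [← Real.rpow_add hε]; simp
    have h3 := h₂ ε hε (min_le_right _ _)
    calc ε = ε ^ β * ε ^ (1 - β) := this
      _ ≤ ε ^ β * (1 / 16) := by gcongr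
      _ = _ := by ring
  obtain ⟨κ, hκ, h₃⟩ := exists_pos_rpow_le hβ (show 0 < ε ^ β / 16 by positivity)
  set k := min κ 1
  have hk : 0 < k := lt_min hκ one_pos
  have e3 : k ^ β ≤ ε ^ β / 16 := h₃ k hk (min_le_left _ _)
  refine ⟨k⁻¹, ε ^ β / 4 * C₀, (one_le_inv₀ hk).2 (min_le_right _ _), by positivity,
    fun t ht μ h R hR => ?_⟩
  have hR0 : 0 < R := by linarith
  have ht0 : 0 < t := hC.trans_le ht.1
  have main := h.one_sub_exp_le_real_Ioc hβ hR0 hε (inv_pos.2 hk)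
  rw [Real.inv_rpow hk.le, Real.rpow_neg hk.le, inv_inv] at main
  set x := t * R ^ (-β) with hx
  have hx0 : 0 < x := by positivity
  have hR1 : R ^ (-β) ≤ 1 := Real.rpow_le_one_of_one_le_of_nonpos hR (by linarith)
  have hx1 : ε ^ β * x ≤ 1 := by
    calc ε ^ β * x ≤ C₀ * (1 / C₀ * 1) := by
          rw [hx]
          gcongr
          exact ht.2
      _ = 1 := by field_simp
  have m1 := half_le_one_sub_exp_neg (by positivity) hx1
  rw [show t * (ε ^ β * R ^ (-β)) = ε ^ β * x by rw [hx]; ring,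
    show t * (k ^ β * R ^ (-β)) = k ^ β * x by rw [hx]; ring] at main
  have m2 : ε * x ≤ ε ^ β / 16 * x := by gcongr
  have m3 : k ^ β * x ≤ ε ^ β / 16 * x := by gcongr
  have m4 : ε ^ β / 4 * (C₀ * R ^ (-β)) ≤ ε ^ β / 4 * x := by
    rw [hx]
    gcongr
    exact ht.1
  linarith

/-- Negative moments of stable subordinators are bounded for times away from zero. -/
lemma exists_lintegral_rpow_neg_le {β C₀ M : ℝ} (hβ : 0 < β) (hC : 0 < C₀) (hM : 0 < M) :
    ∃ B : ℝ, 0 ≤ B ∧ ∀ t, C₀ ≤ t → ∀ μ, IsStableLaw β t μ →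
      ∫⁻ u, ENNReal.ofReal (u ^ (-M)) ∂μ ≤ ENNReal.ofReal B := by
  have hint : IntegrableOn (fun l : ℝ => l ^ (M - 1) * Real.exp (-C₀ * l ^ β)) (Ioi 0) :=
    integrableOn_rpow_mul_exp_neg_mul_rpow (by linarith) hβ hC
  have hΓ := Real.Gamma_pos_of_pos hM
  have hI0 : 0 ≤ ∫ l in Ioi 0, l ^ (M - 1) * Real.exp (-C₀ * l ^ β) :=
    setIntegral_nonneg measurableSet_Ioi fun l hl => by
      have : (0 : ℝ) < l := hl
      positivity
  refine ⟨(Real.Gamma M)⁻¹ * ∫ l in Ioi 0, l ^ (M - 1) * Real.exp (-C₀ * l ^ β), by positivity,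
    fun t ht μ h => ?_⟩
  have := h.isProbabilityMeasure hβ
  have hrep : ∀ u : ℝ, 0 < u → ENNReal.ofReal (u ^ (-M)) = ENNReal.ofReal (Real.Gamma M)⁻¹ *
      ∫⁻ l in Ioi 0, ENNReal.ofReal (l ^ (M - 1) * Real.exp (-u * l)) := by
    intro u hu
    have h1 := Real.integral_rpow_mul_exp_neg_mul_Ioi hM hu
    simp only [← neg_mul] at h1
    rw [← ofReal_integral_eq_lintegral_ofReal, h1, ← ENNReal.ofReal_mul (by positivity),
      Real.rpow_neg hu.le, one_div, Real.inv_rpow hu.le]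
    · field_simp
    · refine Integrable.of_integral_ne_zero ?_
      rw [h1]
      positivity
    · filter_upwards [ae_restrict_mem measurableSet_Ioi] with l hl
      have : (0 : ℝ) < l := hl
      positivity
  calc ∫⁻ u, ENNReal.ofReal (u ^ (-M)) ∂μ
      = ∫⁻ u, ENNReal.ofReal (Real.Gamma M)⁻¹ *
        (∫⁻ l in Ioi 0, ENNReal.ofReal (l ^ (M - 1) * Real.exp (-u * l))) ∂μ :=
        lintegral_congr_ae (h.1.mono fun u hu => hrep u hu)
    _ = ENNReal.ofReal (Real.Gamma M)⁻¹ *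
        ∫⁻ l in Ioi 0, ∫⁻ u, ENNReal.ofReal (l ^ (M - 1) * Real.exp (-u * l)) ∂μ := by
        rw [lintegral_const_mul' _ _ ENNReal.ofReal_ne_top, lintegral_lintegral_swap]
        refine Measurable.aemeasurable ?_
        unfold Function.uncurry
        fun_prop
    _ ≤ ENNReal.ofReal (Real.Gamma M)⁻¹ *
        ∫⁻ l in Ioi 0, ENNReal.ofReal (l ^ (M - 1) * Real.exp (-C₀ * l ^ β)) := by
        refine mul_le_mul' le_rfl ?_
        refine setLIntegral_mono' measurableSet_Ioi fun l hl => ?_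
        have hl : (0 : ℝ) < l := hl
        obtain ⟨i1, i2⟩ := h.2 l hl.le
        rw [← ofReal_integral_eq_lintegral_ofReal (i1.const_mul _)
          (Eventually.of_forall fun u => by positivity), integral_const_mul, i2]
        gcongr
    _ = _ := by
        rw [ENNReal.ofReal_mul (by positivity), ofReal_integral_eq_lintegral_ofReal hint]
        filter_upwards [ae_restrict_mem measurableSet_Ioi] with l hl
        have : (0 : ℝ) < l := hl
        positivity

/-- Integrals of functions with at most polynomial decrease against two stable laws are
comparable. -/
lemma exists_lintegral_le_mul_lintegral {β C₀ M : ℝ} (hβ : 0 < β) (hβ1 : β < 1) (hC : 0 < C₀)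
    (hM : 0 < M) :
    ∃ D : ℝ, 0 < D ∧ ∀ t ∈ Icc C₀ (1 / C₀), ∀ t' ∈ Icc C₀ (1 / C₀), ∀ μ μ' : Measure ℝ,
      IsStableLaw β t μ → IsStableLaw β t' μ' → ∀ g : ℝ → ENNReal, Measurable g →
      (∀ u v, 0 < u → u ≤ v → g u ≤ ENNReal.ofReal ((v / u) ^ M) * g v) →
      ∫⁻ u, g u ∂μ ≤ ENNReal.ofReal D * ∫⁻ u, g u ∂μ' := by
  obtain ⟨K, c, hK, hc, hwin⟩ := exists_le_real_Ioc hβ hβ1 hC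
  obtain ⟨B, hB, hmom⟩ := exists_lintegral_rpow_neg_le hβ hC hM
  have hK0 : 0 < K := by linarith
  refine ⟨B * (K ^ M / c) + K ^ M / c * (2 * (1 / C₀) * K ^ β), by positivity,
    fun t ht t' ht' μ μ' h h' g hg hmono => ?_⟩
  have := h.isProbabilityMeasure hβ
  have := h'.isProbabilityMeasure hβ
  have hloc : ∀ u, 1 ≤ u → g u ≤ ENNReal.ofReal (K ^ M / c) *
      (ENNReal.ofReal (u ^ β) * ∫⁻ v in Ioc u (K * u), g v ∂μ') := by
    intro u hu
    have hu0 : 0 < u := by linarith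
    have h1 : ENNReal.ofReal (c * u ^ (-β)) ≤ μ' (Ioc u (K * u)) := by
      rw [← ofReal_measureReal]
      exact ENNReal.ofReal_le_ofReal (hwin t' ht' μ' h' u hu)
    have h2 : ENNReal.ofReal (c * u ^ (-β)) * g u ≤
        ENNReal.ofReal (K ^ M) * ∫⁻ v in Ioc u (K * u), g v ∂μ' := by
      calc ENNReal.ofReal (c * u ^ (-β)) * g u ≤ g u * μ' (Ioc u (K * u)) := by
            rw [mul_comm]
            gcongr
        _ = ∫⁻ v in Ioc u (K * u), g u ∂μ' := (setLIntegral_const _ _).symm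
        _ ≤ ∫⁻ v in Ioc u (K * u), ENNReal.ofReal (K ^ M) * g v ∂μ' := by
            refine setLIntegral_mono' measurableSet_Ioc fun v hv => ?_
            refine (hmono u v hu0 hv.1.le).trans ?_
            gcongr
            · exact div_nonneg (hu0.trans hv.1).le hu0.le
            · rw [div_le_iff₀ hu0]
              exact hv.2
        _ = _ := lintegral_const_mul _ hg
    calc g u = ENNReal.ofReal (c⁻¹ * u ^ β) * (ENNReal.ofReal (c * u ^ (-β)) * g u) := by
          rw [← mul_assoc, ← ENNReal.ofReal_mul (by positivity), Real.rpow_neg hu0.le,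
            show c⁻¹ * u ^ β * (c * (u ^ β)⁻¹) = 1 by field_simp]
          simp
      _ ≤ ENNReal.ofReal (c⁻¹ * u ^ β) *
          (ENNReal.ofReal (K ^ M) * ∫⁻ v in Ioc u (K * u), g v ∂μ') := by gcongr
      _ = _ := by
          rw [← mul_assoc, ← mul_assoc, ← ENNReal.ofReal_mul (by positivity),
            ← ENNReal.ofReal_mul (by positivity)]
          congr 2
          ring
  have hsmall : ∫⁻ u in Iic 1, g u ∂μ ≤
      ENNReal.ofReal (B * (K ^ M / c)) * ∫⁻ u, g u ∂μ' := by
    have h1 : g 1 ≤ ENNReal.ofReal (K ^ M / c) * ∫⁻ u, g u ∂μ' := by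
      refine (hloc 1 le_rfl).trans ?_
      gcongr
      rw [Real.one_rpow, ENNReal.ofReal_one, one_mul]
      exact setLIntegral_le_lintegral _ _
    calc ∫⁻ u in Iic 1, g u ∂μ ≤ ∫⁻ u in Iic 1, ENNReal.ofReal (u ^ (-M)) * g 1 ∂μ := by
          refine lintegral_mono_ae ?_
          filter_upwards [ae_restrict_of_ae h.1, ae_restrict_mem measurableSet_Iic] with u hu hu1
          refine (hmono u 1 hu hu1).trans_eq ?_
          rw [one_div, Real.inv_rpow hu.le, Real.rpow_neg hu.le]
      _ ≤ ∫⁻ u, ENNReal.ofReal (u ^ (-M)) * g 1 ∂μ := setLIntegral_le_lintegral _ _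
      _ = (∫⁻ u, ENNReal.ofReal (u ^ (-M)) ∂μ) * g 1 := lintegral_mul_const _ (by fun_prop)
      _ ≤ ENNReal.ofReal B * (ENNReal.ofReal (K ^ M / c) * ∫⁻ u, g u ∂μ') := by
          gcongr
          exact hmom t ht.1 μ h
      _ = _ := by rw [← mul_assoc, ← ENNReal.ofReal_mul hB]
  have hlarge : ∫⁻ u in (Iic 1)ᶜ, g u ∂μ ≤
      ENNReal.ofReal (K ^ M / c * (2 * (1 / C₀) * K ^ β)) * ∫⁻ u, g u ∂μ' := by
    set E : Set (ℝ × ℝ) := {p | p.1 < p.2 ∧ p.2 ≤ K * p.1}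
    have hE : MeasurableSet E :=
      (measurableSet_lt measurable_fst measurable_snd).inter
        (measurableSet_le measurable_snd (measurable_fst.const_mul K))
    set F : ℝ → ℝ → ENNReal := fun u v =>
      E.indicator (fun p => ENNReal.ofReal (p.1 ^ β) * g p.2) (u, v) with hF
    have hFm : Measurable (Function.uncurry F) := by
      change Measurable (E.indicator (fun p => ENNReal.ofReal (p.1 ^ β) * g p.2))
      refine Measurable.indicator ?_ hE
      exact Measurable.mul (by fun_prop) (hg.comp measurable_snd)
    calc ∫⁻ u in (Iic 1)ᶜ, g u ∂μ
        ≤ ∫⁻ u in (Iic 1)ᶜ, ENNReal.ofReal (K ^ M / c) * ∫⁻ v, F u v ∂μ' ∂μ := by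
          refine setLIntegral_mono' measurableSet_Iic.compl fun u hu => ?_
          have hu1 : 1 ≤ u := by
            rw [compl_Iic] at hu
            exact (mem_Ioi.1 hu).le
          refine (hloc u hu1).trans_eq ?_
          rw [← lintegral_const_mul _ hg, ← lintegral_indicator measurableSet_Ioc]
          rfl
      _ ≤ ∫⁻ u, ENNReal.ofReal (K ^ M / c) * ∫⁻ v, F u v ∂μ' ∂μ :=
          setLIntegral_le_lintegral _ _
      _ = ENNReal.ofReal (K ^ M / c) * ∫⁻ v, ∫⁻ u, F u v ∂μ ∂μ' := by
          rw [lintegral_const_mul' _ _ ENNReal.ofReal_ne_top,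
            lintegral_lintegral_swap hFm.aemeasurable]
      _ ≤ ENNReal.ofReal (K ^ M / c) *
          ∫⁻ v, ENNReal.ofReal (2 * (1 / C₀) * K ^ β) * g v ∂μ' := by
          refine mul_le_mul' le_rfl ?_
          refine lintegral_mono_ae ?_
          filter_upwards [h'.1] with v hv
          have hvK : 0 < v / K := by positivity
          calc ∫⁻ u, F u v ∂μ
              ≤ ∫⁻ u, (Ici (v / K)).indicator (fun _ => ENNReal.ofReal (v ^ β) * g v) u ∂μ := by
                refine lintegral_mono_ae ?_
                filter_upwards [h.1] with u hu
                by_cases hm : (u, v) ∈ E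
                · have hm' : u ∈ Ici (v / K) := by
                    rw [mem_Ici, div_le_iff₀ hK0, mul_comm]
                    exact hm.2
                  rw [hF, indicator_of_mem hm']
                  simp only [indicator_of_mem hm]
                  gcongr
                  exact hm.1.le
                · simp [hF, indicator_of_notMem hm]
            _ = ENNReal.ofReal (v ^ β) * g v * μ (Ici (v / K)) := by
                rw [lintegral_indicator measurableSet_Ici, setLIntegral_const]
            _ ≤ ENNReal.ofReal (v ^ β) * g v * ENNReal.ofReal (2 * (1 / C₀) * (v / K) ^ (-β)) := by
                gcongr
                rw [← ofReal_measureReal]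
                refine ENNReal.ofReal_le_ofReal ((h.real_Ici_le hβ hvK).trans ?_)
                gcongr
                exact ht.2
            _ = _ := by
                rw [mul_right_comm, ← ENNReal.ofReal_mul (by positivity)]
                congr 2
                rw [Real.div_rpow hv.le hK0.le, Real.rpow_neg hv.le, Real.rpow_neg hK0.le]
                field_simp
      _ = _ := by
          rw [lintegral_const_mul _ hg, ← mul_assoc, ← ENNReal.ofReal_mul (by positivity)]
  rw [← lintegral_add_compl g measurableSet_Iic, ENNReal.ofReal_add (by positivity) (by positivity),
    add_mul]
  exact add_le_add hsmall hlarge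

/-- The law with density `σ t` on the positive half-line. -/
noncomputable def densityLaw (σ : ℝ → ℝ → ℝ) (t : ℝ) : Measure ℝ :=
  (volume.restrict (Ioi 0)).withDensity fun u => ENNReal.ofReal (σ t u)

lemma IsStableSubordinatorDensity.isStableLaw {α : ℝ} {σ : ℝ → ℝ → ℝ}
    (h : IsStableSubordinatorDensity α σ) {t : ℝ} (ht : 0 < t) :
    IsStableLaw (α / 2) t (densityLaw σ t) := by
  have hm : Measurable fun u => ENNReal.ofReal (σ t u) := (h.2.1 t ht).ennreal_ofReal
  refine ⟨(withDensity_absolutelyContinuous _ _).ae_le (ae_restrict_mem measurableSet_Ioi),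
    fun l hl => ?_⟩
  have heq : ∫ u, Real.exp (-u * l) ∂densityLaw σ t = Real.exp (-t * l ^ (α / 2)) := by
    rw [← h.2.2 t l ht hl, densityLaw, integral_withDensity_eq_integral_toReal_smul hm
      (Eventually.of_forall fun u => ENNReal.ofReal_lt_top)]
    refine setIntegral_congr_fun measurableSet_Ioi fun u hu => ?_
    simp only [smul_eq_mul]
    rw [ENNReal.toReal_ofReal (h.1 t ht u hu), mul_comm]
  refine ⟨Integrable.of_integral_ne_zero ?_, heq⟩
  rw [heq]
  positivity

lemma subKernel_eq_toReal {ζ α t r s : ℝ} {σ : ℝ → ℝ → ℝ} (hζ : -1/2 < ζ)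
    (h : IsStableSubordinatorDensity α σ) (ht : 0 < t) (hr : 0 < r) (hs : 0 < s) :
    subKernel ζ σ t r s =
      (∫⁻ u, ENNReal.ofReal (besselHeat ζ u r s) ∂densityLaw σ t).toReal := by
  have hm := h.2.1 t ht
  have hb := measurable_besselHeat ζ r s
  unfold subKernel densityLaw
  rw [integral_eq_lintegral_of_nonneg_ae _ (hb.fun_mul hm).aestronglyMeasurable,
    lintegral_withDensity_eq_lintegral_mul _ hm.ennreal_ofReal hb.ennreal_ofReal]
  · congr 1
    refine setLIntegral_congr_fun measurableSet_Ioi fun u hu => ?_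
    simp only [Pi.mul_apply]
    rw [ENNReal.ofReal_mul (besselHeat_nonneg hζ hu hr hs), mul_comm]
  · filter_upwards [ae_restrict_mem measurableSet_Ioi] with u hu
    exact mul_nonneg (besselHeat_nonneg hζ hu hr hs) (h.1 t ht u hu)

lemma ENNReal.toReal_le_mul_toReal {a b : ENNReal} {D : ℝ} (hD : 0 < D)
    (hab : a ≤ ENNReal.ofReal D * b) (hba : b ≤ ENNReal.ofReal D * a) :
    a.toReal ≤ D * b.toReal := by
  by_cases hb : b = ⊤
  · have ha : a = ⊤ := by
      by_contra ha
      exact ENNReal.mul_ne_top ENNReal.ofReal_ne_top ha (top_le_iff.1 (hb ▸ hba))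
    simp [ha, hb]
  · have := ENNReal.toReal_mono (ENNReal.mul_ne_top ENNReal.ofReal_ne_top hb) hab
    rwa [ENNReal.toReal_mul, ENNReal.toReal_ofReal hD.le] at this

theorem stmt13 (ζ α C₀ : ℝ) (hζ : -1/2 < ζ) (hα0 : 0 < α) (hα2 : α < 2)
    (hC0 : 0 < C₀) (hC1 : C₀ ≤ 1)
    (σ : ℝ → ℝ → ℝ) (hσ : IsStableSubordinatorDensity α σ) :
    ∃ c C : ℝ, 0 < c ∧ 0 < C ∧
      ∀ τ ∈ Icc C₀ (1 / C₀), ∀ z s : ℝ, 0 < z → 0 < s →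
        c * subKernel ζ σ 1 z s ≤ subKernel ζ σ τ z s ∧
          subKernel ζ σ τ z s ≤ C * subKernel ζ σ 1 z s := by
  obtain ⟨D, hD, hcomp⟩ := exists_lintegral_le_mul_lintegral (β := α / 2) (M := ζ + 5 / 2)
    (by linarith) (by linarith) hC0 (by linarith)
  refine ⟨D⁻¹, D, by positivity, hD, fun τ hτ z s hz hs => ?_⟩
  have h1 : (1 : ℝ) ∈ Icc C₀ (1 / C₀) := ⟨hC1, (one_le_div hC0).2 hC1⟩
  have key : ∀ t ∈ Icc C₀ (1 / C₀), ∀ t' ∈ Icc C₀ (1 / C₀),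
      ∫⁻ u, ENNReal.ofReal (besselHeat ζ u z s) ∂densityLaw σ t ≤
        ENNReal.ofReal D * ∫⁻ u, ENNReal.ofReal (besselHeat ζ u z s) ∂densityLaw σ t' := by
    intro t ht t' ht'
    refine hcomp t ht t' ht' _ _ (hσ.isStableLaw (hC0.trans_le ht.1))
      (hσ.isStableLaw (hC0.trans_le ht'.1)) _ (measurable_besselHeat ζ z s).ennreal_ofReal
      fun u v hu huv => ?_
    have hv := hu.trans_le huv
    rw [← ENNReal.ofReal_mul (by positivity)]
    exact ENNReal.ofReal_le_ofReal (besselHeat_le_of_le hζ hu huv hz hs)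
  rw [subKernel_eq_toReal hζ hσ one_pos hz hs,
    subKernel_eq_toReal hζ hσ (hC0.trans_le hτ.1) hz hs]
  refine ⟨?_, ENNReal.toReal_le_mul_toReal hD (key τ hτ 1 h1) (key 1 h1 τ hτ)⟩
  rw [inv_mul_le_iff₀ hD]
  exact ENNReal.toReal_le_mul_toReal hD (key 1 h1 τ hτ) (key τ hτ 1 h1)
end

section
/- Let ζ ∈ (-1/2, ∞) and 0 < C₀ ≤ 1. Then there exist constants c₁, c₂ > 0 and K₁, K₂ > 0 (all depending only on ζ and C₀) such that for all τ ∈ [C₀, 1/C₀] and all z, s > 0: K₁ · p_ζ^{(2)}(1, c₁ z, c₁ s) ≤ p_ζ^{(2)}(τ,z,s) ≤ K₂ · p_ζ^{(2)}(1, c₂ z, c₂ s). -/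
open MeasureTheory Real Set Filter

/-- The entire function `w ↦ ∑ wᵏ / (k! Γ(k + ν + 1))`, so that
`besselI ν x = (x / 2) ^ ν * besselEntire ν (x ^ 2 / 4)`. -/
noncomputable def besselEntire (ν w : ℝ) : ℝ :=
  ∑' k : ℕ, w ^ k / ((Nat.factorial k : ℝ) * Real.Gamma ((k : ℝ) + ν + 1))

lemma gamma_nat_add_pos {ν : ℝ} (hν : -1 < ν) (k : ℕ) : 0 < Real.Gamma ((k : ℝ) + ν + 1) :=
  Real.Gamma_pos_of_pos (by have := k.cast_nonneg (α := ℝ); linarith)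

lemma gamma_nat_add_succ {ν : ℝ} (hν : -1 < ν) (k : ℕ) :
    Real.Gamma ((k : ℝ) + (ν + 1) + 1) = ((k : ℝ) + ν + 1) * Real.Gamma ((k : ℝ) + ν + 1) := by
  rw [← Real.Gamma_add_one (by have := k.cast_nonneg (α := ℝ); linarith)]
  ring_nf

lemma summable_besselEntire {ν : ℝ} (hν : -1 < ν) (w : ℝ) :
    Summable fun k : ℕ => w ^ k / ((Nat.factorial k : ℝ) * Real.Gamma ((k : ℝ) + ν + 1)) := by
  refine summable_of_ratio_norm_eventually_le (r := 1 / 2) (by norm_num) ?_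
  obtain ⟨N, hN⟩ := exists_nat_gt (2 * |w| + 1)
  filter_upwards [eventually_ge_atTop N] with k hk
  have hk' : (N : ℝ) ≤ k := by exact_mod_cast hk
  have hG := gamma_nat_add_pos hν k
  have hf : (0 : ℝ) < Nat.factorial k := by positivity
  have hpos : 0 < (k : ℝ) + ν + 1 := by have := k.cast_nonneg (α := ℝ); linarith
  have e : ((k + 1 : ℕ) : ℝ) + ν + 1 = (k : ℝ) + (ν + 1) + 1 := by push_cast; ring
  rw [e, gamma_nat_add_succ hν, Nat.factorial_succ, Real.norm_eq_abs, Real.norm_eq_abs,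
    abs_div, abs_div, abs_pow, abs_pow, abs_of_pos (mul_pos hf hG),
    abs_of_pos (a := ((_ : ℕ) : ℝ) * _) (by push_cast; positivity),
    div_le_iff₀ (by push_cast; positivity)]
  have hb : 2 * |w| ≤ ((k : ℝ) + 1) * ((k : ℝ) + ν + 1) := by
    have := abs_nonneg w
    nlinarith
  have e2 : 1 / 2 * (|w| ^ k / ((Nat.factorial k : ℝ) * Real.Gamma ((k : ℝ) + ν + 1))) *
      ((((k + 1) * Nat.factorial k : ℕ) : ℝ) *
        (((k : ℝ) + ν + 1) * Real.Gamma ((k : ℝ) + ν + 1))) =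
      |w| ^ k * (((k : ℝ) + 1) * ((k : ℝ) + ν + 1)) / 2 := by
    push_cast
    field_simp
  rw [e2, pow_succ]
  have := mul_le_mul_of_nonneg_left hb (pow_nonneg (abs_nonneg w) k)
  linarith

lemma besselEntire_pos {ν w : ℝ} (hν : -1 < ν) (hw : 0 < w) : 0 < besselEntire ν w :=
  (summable_besselEntire hν w).tsum_pos
    (fun k => by have := gamma_nat_add_pos hν k; positivity) 0
    (by have := gamma_nat_add_pos hν 0; positivity)

lemma natCast_mul_div_factorial_succ {ν : ℝ} (x : ℝ) (k : ℕ) :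
    ((k + 1 : ℕ) : ℝ) * x /
        ((Nat.factorial (k + 1) : ℝ) * Real.Gamma (((k + 1 : ℕ) : ℝ) + ν + 1)) =
      x / ((Nat.factorial k : ℝ) * Real.Gamma ((k : ℝ) + (ν + 1) + 1)) := by
  have e : ((k + 1 : ℕ) : ℝ) + ν + 1 = (k : ℝ) + (ν + 1) + 1 := by push_cast; ring
  rw [e, Nat.factorial_succ, Nat.cast_mul, mul_assoc, mul_div_mul_left _ _ (by positivity)]

lemma hasSum_natCast_mul_besselEntire {ν : ℝ} (hν : -1 < ν) (w : ℝ) :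
    HasSum (fun k : ℕ => (k : ℝ) * w ^ (k - 1) /
      ((Nat.factorial k : ℝ) * Real.Gamma ((k : ℝ) + ν + 1))) (besselEntire (ν + 1) w) := by
  rw [← hasSum_nat_add_iff' 1]
  simp only [Finset.range_one, Finset.sum_singleton, Nat.cast_zero, zero_mul, zero_div, sub_zero,
    add_tsub_cancel_right, natCast_mul_div_factorial_succ]
  exact (summable_besselEntire (by linarith) w).hasSum

lemma hasDerivAt_besselEntire {ν : ℝ} (hν : -1 < ν) (w : ℝ) :
    HasDerivAt (besselEntire ν) (besselEntire (ν + 1) w) w := by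
  rw [← (hasSum_natCast_mul_besselEntire hν w).tsum_eq]
  have hw : w ∈ Metric.ball (0 : ℝ) (|w| + 1) := by simp
  change HasDerivAt (fun y : ℝ => ∑' k : ℕ, y ^ k / ((Nat.factorial k : ℝ) *
    Real.Gamma ((k : ℝ) + ν + 1))) _ w
  refine hasDerivAt_tsum_of_isPreconnected
    (g := fun k y => y ^ k / ((Nat.factorial k : ℝ) * Real.Gamma ((k : ℝ) + ν + 1)))
    (g' := fun k y => (k : ℝ) * y ^ (k - 1) /
      ((Nat.factorial k : ℝ) * Real.Gamma ((k : ℝ) + ν + 1)))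
    (hasSum_natCast_mul_besselEntire hν (|w| + 1)).summable Metric.isOpen_ball
    (convex_ball (0 : ℝ) _).isPreconnected (fun k y _ => ?_) (fun k y hy => ?_) hw
    (summable_besselEntire hν w) hw
  · exact (hasDerivAt_pow k y).div_const _
  · have := gamma_nat_add_pos hν k
    have hy' : |y| ≤ |w| + 1 := by
      rw [mem_ball_zero_iff, Real.norm_eq_abs] at hy
      exact hy.le
    rw [Real.norm_eq_abs, abs_div, abs_mul, abs_pow, Nat.abs_cast,
      abs_of_pos (a := _ * Real.Gamma _) (by positivity)]
    gcongr

/-- The contiguity relation `F_ν = (ν + 1) F_{ν+1} + w F_{ν+2}` for `F = besselEntire`, in terms of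
the second moment of the series. -/
lemma hasSum_natCast_sq_mul_besselEntire {ν : ℝ} (hν : -1 < ν) (w : ℝ) :
    HasSum (fun k : ℕ => (k : ℝ) ^ 2 * w ^ k /
      ((Nat.factorial k : ℝ) * Real.Gamma ((k : ℝ) + ν + 1)))
      (w * besselEntire ν w - ν * (w * besselEntire (ν + 1) w)) := by
  rw [← hasSum_nat_add_iff' 1]
  have h0 : HasSum _ (besselEntire ν w) := (summable_besselEntire hν w).hasSum
  have h1 : HasSum _ (besselEntire (ν + 1) w) := (summable_besselEntire (by linarith) w).hasSum
  have h := (h0.mul_left w).sub ((h1.mul_left w).mul_left ν)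
  simp only [Finset.range_one, Finset.sum_singleton, Nat.cast_zero, ne_eq, OfNat.ofNat_ne_zero,
    not_false_eq_true, zero_pow, zero_mul, zero_div, sub_zero]
  convert h using 2 with k
  have hG := gamma_nat_add_pos hν k
  have hpos : 0 < (k : ℝ) + ν + 1 := by have := k.cast_nonneg (α := ℝ); linarith
  rw [pow_two, mul_assoc, natCast_mul_div_factorial_succ, gamma_nat_add_succ hν]
  push_cast
  field_simp
  ring

/-- Cauchy–Schwarz for the weights `wᵏ / (k! Γ(k + ν + 1))`. -/
lemma besselEntire_turan {ν w : ℝ} (hν : -1 < ν) (hw : 0 < w) :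
    w * besselEntire (ν + 1) w ^ 2 + ν * (besselEntire ν w * besselEntire (ν + 1) w) ≤
      besselEntire ν w ^ 2 := by
  have hF := besselEntire_pos hν hw
  set F := besselEntire ν w with hFdef
  set F1 := besselEntire (ν + 1) w with hF1def
  have h0 : HasSum _ F := (summable_besselEntire hν w).hasSum
  have h1 := (hasSum_natCast_mul_besselEntire hν w).mul_left w
  have h2 := hasSum_natCast_sq_mul_besselEntire hν w
  have h := ((h2.mul_left (F ^ 2)).sub (h1.mul_left (2 * F * (w * F1)))).add
    (h0.mul_left ((w * F1) ^ 2))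
  have hnn := h.nonneg fun k => by
    have hG := gamma_nat_add_pos hν k
    have e : w * ((k : ℝ) * w ^ (k - 1) /
        ((Nat.factorial k : ℝ) * Real.Gamma ((k : ℝ) + ν + 1))) =
        k * (w ^ k / ((Nat.factorial k : ℝ) * Real.Gamma ((k : ℝ) + ν + 1))) := by
      rcases k with _ | k
      · simp
      · rw [Nat.add_sub_cancel, pow_succ]; ring
    have : 0 ≤ (w ^ k / ((Nat.factorial k : ℝ) * Real.Gamma ((k : ℝ) + ν + 1))) *
        (k * F - w * F1) ^ 2 := by positivity
    rw [e]
    refine this.trans_eq ?_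
    ring
  rw [← hFdef, ← hF1def] at hnn
  have hfac : 0 ≤ (F * w) * (F ^ 2 - (w * F1 ^ 2 + ν * (F * F1))) := by
    refine hnn.trans_eq ?_
    ring
  linarith [nonneg_of_mul_nonneg_right hfac (by positivity)]

lemma besselEntire_succ_le {ν x : ℝ} (hν : -1 < ν) (hx : 0 < x) :
    x / 2 * besselEntire (ν + 1) (x ^ 2 / 4) ≤ (1 + 2 / x) * besselEntire ν (x ^ 2 / 4) := by
  have hw : 0 < x ^ 2 / 4 := by positivity
  have hT := besselEntire_turan hν hw
  have hF := besselEntire_pos hν hw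
  have hF1 := besselEntire_pos (ν := ν + 1) (by linarith) hw
  set F := besselEntire ν (x ^ 2 / 4)
  set F1 := besselEntire (ν + 1) (x ^ 2 / 4)
  by_contra! hcon
  have e : (1 + 2 / x) * F = (x + 2) * F / x := by field_simp
  rw [e, div_lt_iff₀ hx] at hcon
  have h1 : x ^ 2 / 4 * F1 ^ 2 - F * F1 < F ^ 2 := by nlinarith [mul_pos hF hF1]
  have h2 : x / 2 * F < x ^ 2 / 4 * F1 - F := by nlinarith
  have h3 : x / 2 * F * F1 < F ^ 2 := by nlinarith
  have h4 : x / 2 * F1 < F := by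
    by_contra! h
    nlinarith
  nlinarith

/-- Up to a constant factor, the function is `x ↦ x⁻² e⁻ˣ x ^ (-ν) I_ν(x)`. -/
lemma antitoneOn_besselEntire {ν : ℝ} (hν : -1 < ν) :
    AntitoneOn (fun x => besselEntire ν (x ^ 2 / 4) * Real.exp (-x) / x ^ 2) (Ioi 0) := by
  have hd : ∀ x ∈ Ioi (0 : ℝ), HasDerivAt
      (fun x => besselEntire ν (x ^ 2 / 4) * Real.exp (-x) / x ^ 2)
      (Real.exp (-x) / x ^ 2 * (x / 2 * besselEntire (ν + 1) (x ^ 2 / 4) -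
        (1 + 2 / x) * besselEntire ν (x ^ 2 / 4))) x := by
    intro x hx
    have hx0 : x ≠ 0 := (mem_Ioi.1 hx).ne'
    have h1 := (hasDerivAt_besselEntire hν (x ^ 2 / 4)).comp x ((hasDerivAt_pow 2 x).div_const 4)
    have h2 := (h1.mul (hasDerivAt_neg x).exp).div (hasDerivAt_pow 2 x) (pow_ne_zero 2 hx0)
    refine h2.congr_deriv ?_
    simp only [Function.comp_apply, Pi.mul_apply]
    field_simp
    ring
  refine antitoneOn_of_deriv_nonpos (convex_Ioi 0)
    (fun x hx => (hd x hx).continuousAt.continuousWithinAt) ?_ ?_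
  · rw [interior_Ioi]
    exact fun x hx => (hd x hx).differentiableAt.differentiableWithinAt
  · rw [interior_Ioi]
    intro x hx
    rw [(hd x hx).deriv]
    exact mul_nonpos_of_nonneg_of_nonpos (by positivity)
      (sub_nonpos.2 (besselEntire_succ_le hν hx))

lemma besselI_eq {ν x : ℝ} (hx : 0 < x) :
    besselI ν x = (x / 2) ^ ν * besselEntire ν (x ^ 2 / 4) := by
  rw [besselI, besselEntire, ← tsum_mul_left]
  refine tsum_congr fun k => ?_
  have e : (x / 2) ^ (2 * (k : ℝ) + ν) = (x / 2) ^ ν * (x ^ 2 / 4) ^ k := by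
    rw [Real.rpow_add (by positivity), Real.rpow_mul (by positivity), Real.rpow_natCast,
      Real.rpow_two, mul_comm]
    congr 2
    ring
  rw [e, mul_div_assoc]

/-- The kernel `besselHeat` at time `1 / c`, without its normalizing power of `c`. -/
noncomputable def besselHeatProfile (ν z s c : ℝ) : ℝ :=
  Real.exp (-(c * (z ^ 2 + s ^ 2) / 4)) * besselEntire ν ((c * (z * s) / 2) ^ 2 / 4)

lemma besselHeat_eq {ζ t r s : ℝ} (ht : 0 < t) (hr : 0 < r) (hs : 0 < s) :
    besselHeat ζ t r s = (4 : ℝ) ^ (1 / 2 - ζ) / 2 * t⁻¹ ^ (ζ + 1 / 2) *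
      besselHeatProfile (ζ - 1 / 2) r s t⁻¹ := by
  have e1 : (r * s / (2 * t) / 2) ^ (ζ - 1 / 2) =
      (r * s) ^ (ζ - 1 / 2) * (4 : ℝ) ^ (1 / 2 - ζ) * t⁻¹ ^ (ζ - 1 / 2) := by
    rw [show r * s / (2 * t) / 2 = r * s * 4⁻¹ * t⁻¹ by field_simp; norm_num,
      Real.mul_rpow (by positivity) (by positivity), Real.mul_rpow (by positivity) (by positivity),
      Real.inv_rpow (by norm_num), ← Real.rpow_neg (by norm_num), neg_sub]
  have e2 : (r * s) ^ (1 / 2 - ζ) * (r * s) ^ (ζ - 1 / 2) = 1 := by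
    rw [← Real.rpow_add (by positivity)]
    simp
  have e3 : t⁻¹ ^ (ζ + 1 / 2) = t⁻¹ ^ (ζ - 1 / 2) * t⁻¹ := by
    rw [← Real.rpow_add_one (by positivity)]
    ring_nf
  rw [besselHeat, besselI_eq (by positivity), besselHeatProfile, e1, e3,
    show -(r ^ 2 + s ^ 2) / (4 * t) = -(t⁻¹ * (r ^ 2 + s ^ 2) / 4) by field_simp,
    show r * s / (2 * t) = t⁻¹ * (r * s) / 2 by field_simp]
  generalize besselEntire _ _ = F
  generalize Real.exp _ = E
  linear_combination (E * F * (4 : ℝ) ^ (1 / 2 - ζ) * t⁻¹ ^ (ζ - 1 / 2) * t⁻¹ / 2) * e2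

lemma besselHeat_one_mul_sqrt {ζ c z s : ℝ} (hc : 0 < c) (hz : 0 < z) (hs : 0 < s) :
    besselHeat ζ 1 (√c * z) (√c * s) =
      (4 : ℝ) ^ (1 / 2 - ζ) / 2 * besselHeatProfile (ζ - 1 / 2) z s c := by
  have hc' := Real.sqrt_pos.2 hc
  rw [besselHeat_eq one_pos (by positivity) (by positivity), inv_one, Real.one_rpow, mul_one,
    besselHeatProfile, besselHeatProfile, mul_pow, mul_pow, Real.sq_sqrt hc.le,
    show √c * z * (√c * s) = √c * √c * (z * s) by ring, Real.mul_self_sqrt hc.le, one_mul, one_mul,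
    mul_add]

lemma besselHeatProfile_pos {ν z s c : ℝ} (hν : -1 < ν) (hz : 0 < z) (hs : 0 < s) (hc : 0 < c) :
    0 < besselHeatProfile ν z s c :=
  mul_pos (Real.exp_pos _) (besselEntire_pos hν (by positivity))

lemma besselHeatProfile_le {ν z s a b : ℝ} (hν : -1 < ν) (hz : 0 < z) (hs : 0 < s) (ha : 0 < a)
    (hab : a ≤ b) :
    besselHeatProfile ν z s b ≤ (b / a) ^ 2 * besselHeatProfile ν z s a := by
  have hb := ha.trans_le hab
  have split : ∀ c, 0 < c → besselHeatProfile ν z s c = (c * (z * s) / 2) ^ 2 *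
      (Real.exp (-(c * (z - s) ^ 2 / 4)) * (besselEntire ν ((c * (z * s) / 2) ^ 2 / 4) *
        Real.exp (-(c * (z * s) / 2)) / (c * (z * s) / 2) ^ 2)) := by
    intro c hc
    rw [besselHeatProfile, show -(c * (z ^ 2 + s ^ 2) / 4) =
      -(c * (z - s) ^ 2 / 4) + -(c * (z * s) / 2) by ring, Real.exp_add]
    field_simp
  have hanti := antitoneOn_besselEntire hν (a := a * (z * s) / 2) (b := b * (z * s) / 2)
    (mem_Ioi.2 (by positivity)) (mem_Ioi.2 (by positivity)) (by gcongr)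
  have hFb := besselEntire_pos (w := (b * (z * s) / 2) ^ 2 / 4) hν (by positivity)
  calc besselHeatProfile ν z s b
      ≤ (b * (z * s) / 2) ^ 2 * (Real.exp (-(a * (z - s) ^ 2 / 4)) *
          (besselEntire ν ((a * (z * s) / 2) ^ 2 / 4) *
            Real.exp (-(a * (z * s) / 2)) / (a * (z * s) / 2) ^ 2)) := by
        rw [split b hb]
        refine mul_le_mul_of_nonneg_left (mul_le_mul ?_ hanti (by positivity) (by positivity))
          (by positivity)
        gcongr
    _ = (b / a) ^ 2 * besselHeatProfile ν z s a := by
        rw [split a ha]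
        field_simp

theorem stmt14 (ζ C₀ : ℝ) (hζ : -1/2 < ζ) (hC0 : 0 < C₀) (hC1 : C₀ ≤ 1) :
    ∃ c₁ c₂ K₁ K₂ : ℝ, 0 < c₁ ∧ 0 < c₂ ∧ 0 < K₁ ∧ 0 < K₂ ∧
      ∀ τ ∈ Icc C₀ (1 / C₀), ∀ z s : ℝ, 0 < z → 0 < s →
        K₁ * besselHeat ζ 1 (c₁ * z) (c₁ * s) ≤ besselHeat ζ τ z s ∧
          besselHeat ζ τ z s ≤ K₂ * besselHeat ζ 1 (c₂ * z) (c₂ * s) := by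
  have hν : -1 < ζ - 1 / 2 := by linarith
  have hp : 0 < ζ + 1 / 2 := by linarith
  have hC2 : 0 < C₀⁻¹ := inv_pos.2 hC0
  refine ⟨√C₀⁻¹, √C₀, C₀ ^ (ζ + 1 / 2) * C₀ ^ 4, C₀⁻¹ ^ (ζ + 1 / 2) * C₀⁻¹ ^ 4,
    by positivity, by positivity, by positivity, by positivity, ?_⟩
  rintro τ ⟨h1, h2⟩ z s hz hs
  have hτ : 0 < τ := hC0.trans_le h1
  have hτ' : 0 < τ⁻¹ := inv_pos.2 hτ
  have hle : τ⁻¹ ≤ C₀⁻¹ := by gcongr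
  have hge : C₀ ≤ τ⁻¹ := by
    rw [one_div] at h2
    exact le_inv_of_le_inv₀ hτ h2
  have hA : (0 : ℝ) < (4 : ℝ) ^ (1 / 2 - ζ) / 2 := by positivity
  rw [besselHeat_one_mul_sqrt hC2 hz hs, besselHeat_one_mul_sqrt hC0 hz hs, besselHeat_eq hτ hz hs]
  have hlow := besselHeatProfile_le hν hz hs hτ' hle
  have hupp := besselHeatProfile_le hν hz hs hC0 hge
  have p1 := besselHeatProfile_pos hν hz hs hτ'
  have p2 := besselHeatProfile_pos hν hz hs hC0
  have p3 := besselHeatProfile_pos hν hz hs hC2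
  set A : ℝ := (4 : ℝ) ^ (1 / 2 - ζ) / 2
  constructor
  · have hq : C₀ ^ 4 * (C₀⁻¹ / τ⁻¹) ^ 2 ≤ 1 := by
      have : C₀ ^ 4 * (C₀⁻¹ / τ⁻¹) ^ 2 = (C₀ * τ) ^ 2 := by field_simp
      rw [this]
      refine pow_le_one₀ (by positivity) ?_
      rwa [le_div_iff₀ hC0, mul_comm] at h2
    calc C₀ ^ (ζ + 1 / 2) * C₀ ^ 4 * (A * besselHeatProfile (ζ - 1 / 2) z s C₀⁻¹)
        ≤ C₀ ^ (ζ + 1 / 2) * C₀ ^ 4 *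
          (A * ((C₀⁻¹ / τ⁻¹) ^ 2 * besselHeatProfile (ζ - 1 / 2) z s τ⁻¹)) := by gcongr
      _ = A * C₀ ^ (ζ + 1 / 2) * (C₀ ^ 4 * (C₀⁻¹ / τ⁻¹) ^ 2) *
          besselHeatProfile (ζ - 1 / 2) z s τ⁻¹ := by ring
      _ ≤ A * τ⁻¹ ^ (ζ + 1 / 2) * 1 * besselHeatProfile (ζ - 1 / 2) z s τ⁻¹ := by gcongr
      _ = _ := by ring
  · have hq : (τ⁻¹ / C₀) ^ 2 ≤ C₀⁻¹ ^ 4 := by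
      calc (τ⁻¹ / C₀) ^ 2 ≤ (C₀⁻¹ / C₀) ^ 2 := by gcongr
        _ = C₀⁻¹ ^ 4 := by field_simp
    calc A * τ⁻¹ ^ (ζ + 1 / 2) * besselHeatProfile (ζ - 1 / 2) z s τ⁻¹
        ≤ A * C₀⁻¹ ^ (ζ + 1 / 2) *
          (C₀⁻¹ ^ 4 * besselHeatProfile (ζ - 1 / 2) z s C₀) := by
          gcongr
          exact hupp.trans (by gcongr)
      _ = _ := by ring
end
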